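/- Under the hypotheses of the scaling-function theorem (C repelling; r and #r⁻¹ continuous at the points of C; m_0 β-Lipschitz at the points of C satisfying the quadrature and low-pass conditions), let h_C(x) = Σ_{ω∈N_C(x)} |φ̂(x,ω)|² and V_0 = closure in L²(X_∞, λ_C) of {π(f)φ̂ : f ∈ L^∞(X, ρ)}. Then the map 𝒥 defined on L^∞(X, ρ) by 𝒥(f) = π(f)φ̂ extends to an isometric isomorphism 𝒥 : L²(X, h_C dρ) → V_0, and it intertwines the operators: U 𝒥 = 𝒥 S_0, where S_0 f = m_0 · (f ∘ r) on L²(X, h_C dρ). -/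

import Mathlib

open MeasureTheory Filter Topology ENNReal

noncomputable section

abbrev Solenoid {X : Type*} (r : X → X) : Type _ :=
  {z : ℤ → X // ∀ n : ℤ, r (z (n + 1)) = z n}

/-- The shift automorphism `r̂` on the solenoid, `(r̂ z) n = z (n-1)`. -/
def shiftHat {X : Type*} (r : X → X) (z : Solenoid r) : Solenoid r :=
  ⟨fun n => z.1 (n - 1), fun n => by
    have h := z.2 (n - 1)
    have h1 : n - 1 + 1 = n := by ring
    rw [h1] at h
    show r (z.1 (n + 1 - 1)) = z.1 (n - 1)
    have h2 : n + 1 - 1 = n := by ring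
    rw [h2]
    exact h⟩

/-- The inverse of the shift automorphism `r̂`. -/
def shiftHatInv {X : Type*} (r : X → X) (z : Solenoid r) : Solenoid r :=
  ⟨fun n => z.1 (n + 1), fun n => z.2 (n + 1)⟩

/-- Integer powers `r̂^n` of the shift automorphism. -/
def shiftHatZ {X : Type*} (r : X → X) : ℤ → Solenoid r → Solenoid r
  | Int.ofNat n => (shiftHat r)^[n]
  | Int.negSucc n => (shiftHatInv r)^[n + 1]

/-- The function `𝔠(z) = #r⁻¹(r(z₀))` on the solenoid. -/
def cFun {X : Type*} (r : X → X) (z : Solenoid r) : ℝ :=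
  Nat.card (r ⁻¹' {r (z.1 0)})

/-- The cocycle `𝔠⁽ⁿ⁾`: `𝔠⁽⁰⁾ = 1`, `𝔠⁽ⁿ⁾ = 𝔠 ⋯ (𝔠∘r̂^{n-1})` for `n ≥ 1`, and
`𝔠⁽⁻ⁿ⁾ = 1/((𝔠∘r̂⁻¹) ⋯ (𝔠∘r̂⁻ⁿ))` for `n ≥ 1`. -/
def cPow {X : Type*} (r : X → X) : ℤ → Solenoid r → ℝ
  | Int.ofNat n => fun z => ∏ k ∈ Finset.range n, cFun r (shiftHatZ r (k : ℤ) z)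
  | Int.negSucc n => fun z =>
      (∏ k ∈ Finset.range (n + 1), cFun r (shiftHatZ r (-(k + 1) : ℤ) z))⁻¹

/-- The set `N_C(x)` of paths starting at `x` converging to the cycle `C = {xc i}`. -/
def NC {X : Type*} [TopologicalSpace X] (r : X → X) {p : ℕ} (xc : ZMod p → X) (x : X) :
    Set (Solenoid r) :=
  {z | z.1 0 = x ∧ ∃ i : ZMod p, Tendsto (fun n : ℕ => z.1 ((p : ℤ) * (n : ℤ))) atTop (𝓝 (xc i))}

/-- The scaling function `φ̂(x, (z_k)) = ∏_{k=1}^∞ α_{i(ω)+k}⁻¹ m₀(z_k) / √(#r⁻¹(r z_k))`. -/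
def scalingFn {X : Type*} (r : X → X) {p : ℕ} (α : ZMod p → ℂ) (ι : Solenoid r → ZMod p)
    (m0 : X → ℂ) (z : Solenoid r) : ℂ :=
  ∏' k : ℕ, (α (ι z + ((k + 1 : ℕ) : ZMod p)))⁻¹ * m0 (z.1 ((k : ℤ) + 1)) /
    (Real.sqrt (Nat.card (r ⁻¹' {r (z.1 ((k : ℤ) + 1))})) : ℂ)

/-!
`𝒥` is the map `g ↦ (g ∘ π₀) φ̂`, where `π₀` is evaluation at time `0`. It is isometric because
`h_C dρ` is the image of `|φ̂|² λ_C` under `π₀`, and its range is `V₀` because it is closed and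
bounded functions are dense in `L²(h_C dρ)`. That `h_C` is finite, in fact at most `1`, is a
conservation of mass: by the quadrature condition, `|m₀(y)|² / #r⁻¹(r(y))` are transition
probabilities for the backward steps `r(y) ↝ y`, and the partial products of `|φ̂|²` along distinct
paths are eventually the probabilities of distinct walks. The intertwining relation is the
refinement equation `α_{i(ω)} √(#r⁻¹(r(x))) φ̂(r̂(x, ω)) = m₀(x) φ̂(x, ω)`, obtained by splitting
off the first factor of the infinite product.
-/

section AnalyticSets

lemma isCompact_Iic_nat_pi (n : ℕ → ℕ) : IsCompact (Set.Iic n) :=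
  Set.Icc_bot (a := n) ▸ isCompact_Icc

lemma exists_truncation_subset {n : ℕ → ℕ} {W : Set (ℕ → ℕ)} (hW : IsOpen W)
    (hnW : Set.Iic n ⊆ W) : ∃ k, {x : ℕ → ℕ | ∀ i < k, x i ≤ n i} ⊆ W := by
  let := PiNat.metricSpaceNatNat
  obtain ⟨δ, hδ, hsub⟩ := (isCompact_Iic_nat_pi n).exists_thickening_subset_open hW hnW
  obtain ⟨k, hk⟩ := exists_pow_lt_of_lt_one hδ one_half_lt_one
  refine ⟨k, fun x hx => hsub (Metric.mem_thickening_iff.2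
    ⟨x ⊓ n, Set.mem_Iic.2 inf_le_right, lt_of_le_of_lt ?_ hk⟩)⟩
  exact PiNat.mem_cylinder_iff_dist_le.1 fun i hi => (min_eq_left (hx i hi)).symm

lemma exists_bounds_lt_measure_image {X : Type*} [MeasurableSpace X] {μ : Measure X}
    (f : (ℕ → ℕ) → X) {c : ℝ≥0∞} (hc : c < μ (Set.range f)) :
    ∃ n : ℕ → ℕ, ∀ k, c < μ (f '' {x | ∀ i < k, x i ≤ n i}) := by
  have hstep : ∀ (k : ℕ) (S : Set (ℕ → ℕ)), ∃ m : ℕ,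
      c < μ (f '' S) → c < μ (f '' (S ∩ {x | x k ≤ m})) := by
    intro k S
    by_cases hS : c < μ (f '' S)
    · have hmono : Monotone fun m : ℕ => f '' (S ∩ {x | x k ≤ m}) := fun a b hab =>
        Set.image_mono fun x hx => ⟨hx.1, hx.2.trans hab⟩
      have hunion : f '' S = ⋃ m : ℕ, f '' (S ∩ {x | x k ≤ m}) := by
        rw [← Set.image_iUnion, ← Set.inter_iUnion, Set.inter_eq_left.2]
        exact fun x _ => Set.mem_iUnion.2 ⟨x k, le_refl (x k)⟩
      rw [hunion, hmono.measure_iUnion] at hS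
      obtain ⟨m, hm⟩ := lt_iSup_iff.1 hS
      exact ⟨m, fun _ => hm⟩
    · exact ⟨0, fun h => absurd h hS⟩
  choose m hm using hstep
  let S : ℕ → Set (ℕ → ℕ) := fun k => k.rec Set.univ fun k T => T ∩ {x | x k ≤ m k T}
  have hS : ∀ k, S k = {x | ∀ i < k, x i ≤ m i (S i)} := by
    intro k
    induction k with
    | zero => simp [S]
    | succ k ih =>
      change S k ∩ {x | x k ≤ m k (S k)} = _
      ext x
      simp only [Nat.forall_lt_succ_right, Set.mem_inter_iff, Set.mem_ofPred_eq]
      nth_rw 1 [ih]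
      rfl
  refine ⟨fun i => m i (S i), fun k => hS k ▸ ?_⟩
  induction k with
  | zero => simpa [S] using hc
  | succ k ih => exact hm k (S k) ih

variable {X : Type*} [TopologicalSpace X] [MeasurableSpace X]

lemma exists_isCompact_subset_le_measure {μ : Measure X} [μ.OuterRegular] {A : Set X}
    (hA : AnalyticSet A) {c : ℝ≥0∞} (hc : c < μ A) : ∃ K ⊆ A, IsCompact K ∧ c ≤ μ K := by
  rw [AnalyticSet] at hA
  obtain rfl | ⟨f, hf, rfl⟩ := hA
  · simp at hc
  obtain ⟨n, hn⟩ := exists_bounds_lt_measure_image f hc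
  refine ⟨_, Set.image_subset_range f _, (isCompact_Iic_nat_pi n).image hf, ?_⟩
  rw [Set.measure_eq_iInf_isOpen]
  refine le_iInf₂ fun V hV => le_iInf fun hVo => ?_
  obtain ⟨k, hk⟩ := exists_truncation_subset (hVo.preimage hf) (Set.image_subset_iff.1 hV)
  exact (hn k).le.trans (measure_mono (Set.image_subset_iff.2 hk))

lemma measure_eq_zero_of_forall_isCompact [TopologicalSpace.MetrizableSpace X] [BorelSpace X]
    {μ : Measure X} [SFinite μ] {A : Set X} (hA : AnalyticSet A)
    (hK : ∀ K ⊆ A, IsCompact K → μ K = 0) : μ A = 0 := by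
  refine absolutelyContinuous_toFinite μ (le_antisymm (le_of_not_gt fun hpos => ?_) zero_le)
  obtain ⟨c, hc0, hc⟩ := exists_between hpos
  obtain ⟨K, hKA, hKc, hcK⟩ := exists_isCompact_subset_le_measure hA hc
  exact hc0.not_ge (hcK.trans_eq (toFinite_absolutelyContinuous μ (hK K hKA hKc)))

end AnalyticSets

section FiberSums

variable {X Ω : Type*} [MeasurableSpace X] [MeasurableSpace Ω]

/-- `lam` is obtained by integrating the counting measures of the sets `N x` against `ρ`. -/
def IsFiberSum (lam : Measure Ω) (ρ : Measure X) (N : X → Set Ω) : Prop :=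
  ∀ F : Ω → ℝ≥0∞, Measurable F → ∫⁻ ω, F ω ∂lam = ∫⁻ x, ∑' ω : N x, F ω ∂ρ

namespace IsFiberSum

variable {lam : Measure Ω} {ρ : Measure X} {N : X → Set Ω} {q : Ω → X}

lemma measure_eq_zero (h : IsFiberSum lam ρ N) {G : Set Ω} (hG : MeasurableSet G)
    (hNG : ∀ᵐ x ∂ρ, ∀ ω ∈ N x, ω ∉ G) : lam G = 0 := by
  rw [← lintegral_indicator_one hG, h _ (measurable_one.indicator hG)]
  refine (lintegral_congr_ae ?_).trans lintegral_zero
  filter_upwards [hNG] with x hx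
  exact ENNReal.tsum_eq_zero.2 fun ω => Set.indicator_of_notMem (hx ω ω.2) _

lemma ae_mem_iUnion (h : IsFiberSum lam ρ N) (hN : MeasurableSet (⋃ x, N x)) :
    ∀ᵐ ω ∂lam, ω ∈ ⋃ x, N x :=
  h.measure_eq_zero hN.compl (ae_of_all _ fun x _ hω hωN => hωN (Set.mem_iUnion_of_mem x hω))

lemma map_withDensity (h : IsFiberSum lam ρ N) (hq : Measurable q) (hNq : ∀ x, ∀ ω ∈ N x, q ω = x)
    {w : Ω → ℝ≥0∞} (hw : Measurable w) :
    (lam.withDensity w).map q = ρ.withDensity fun x => ∑' ω : N x, w ω := by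
  ext S hS
  rw [withDensity_apply _ hS, Measure.map_apply hq hS, withDensity_apply _ (hq hS),
    ← lintegral_indicator hS, ← lintegral_indicator (hq hS), h _ (hw.indicator (hq hS))]
  refine lintegral_congr fun x => ?_
  have hmem : ∀ ω : N x, (ω : Ω) ∈ q ⁻¹' S ↔ x ∈ S := fun ω => by
    rw [Set.mem_preimage, hNq x ω ω.2]
  by_cases hx : x ∈ S <;> simp [Set.indicator, hmem, hx]

variable [TopologicalSpace X] [TopologicalSpace.MetrizableSpace X] [SecondCountableTopology X]
  [BorelSpace X] [StandardBorelSpace Ω] [SFinite ρ]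

-- `x ↦ ∑' ω : N x, F ω` need not be measurable, so that the vanishing of its integral only yields
-- null compact subsets; the projection of a measurable set being analytic, this is enough.
lemma ae_forall_mem_fiber (h : IsFiberSum lam ρ N) (hq : Measurable q)
    (hNq : ∀ x, ∀ ω ∈ N x, q ω = x) (hN : MeasurableSet (⋃ x, N x)) {P : Ω → Prop}
    (hP : ∀ᵐ ω ∂lam, P ω) : ∀ᵐ x ∂ρ, ∀ ω ∈ N x, P ω := by
  obtain ⟨G, hPG, hG, hG0⟩ := exists_measurable_superset_of_null (ae_iff.1 hP)
  have hnull : ρ (q '' (G ∩ ⋃ x, N x)) = 0 := by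
    refine measure_eq_zero_of_forall_isCompact ((hG.inter hN).analyticSet_image hq)
      fun K hK hKc => le_antisymm ?_ zero_le
    rw [← hG0, ← lintegral_indicator_one hG, h _ (measurable_one.indicator hG),
      ← lintegral_indicator_one hKc.measurableSet]
    refine lintegral_mono fun x => Set.indicator_apply_le' (fun hx => ?_) fun _ => zero_le
    obtain ⟨ω, ⟨hωG, hωN⟩, rfl⟩ := hK hx
    obtain ⟨y, hy⟩ := Set.mem_iUnion.1 hωN
    refine le_trans ?_ (ENNReal.le_tsum (⟨ω, (hNq y ω hy).symm ▸ hy⟩ : N (q ω)))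
    rw [Set.indicator_of_mem hωG, Pi.one_apply, Pi.one_apply]
  filter_upwards [measure_eq_zero_iff_ae_notMem.1 hnull] with x hx ω hω
  by_contra hPω
  exact hx ⟨ω, ⟨hPG hPω, Set.mem_iUnion_of_mem x hω⟩, hNq x ω hω⟩

lemma quasiMeasurePreserving (h : IsFiberSum lam ρ N) (hq : Measurable q)
    (hNq : ∀ x, ∀ ω ∈ N x, q ω = x) (hN : MeasurableSet (⋃ x, N x)) {r : X → X} {T : Ω → Ω}
    (hr : Measure.QuasiMeasurePreserving r ρ ρ) (hT : Measurable T)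
    (hTN : ∀ x, ∀ ω ∈ N x, T ω ∈ N (r x)) : Measure.QuasiMeasurePreserving T lam lam := by
  refine ⟨hT, Measure.AbsolutelyContinuous.mk fun G hG hG0 => ?_⟩
  rw [Measure.map_apply hT hG]
  have hfiber := h.ae_forall_mem_fiber hq hNq hN (measure_eq_zero_iff_ae_notMem.1 hG0)
  refine h.measure_eq_zero (hT hG) ?_
  filter_upwards [hr.ae hfiber] with x hx ω hω
  exact hx _ (hTN x ω hω)

end IsFiberSum

end FiberSums

section WeightedComposition

variable {X Ω 𝕜 : Type*} [MeasurableSpace X] [MeasurableSpace Ω] [RCLike 𝕜] {lam : Measure Ω}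
  {q : Ω → X} {φ : Ω → 𝕜} {p : ℝ≥0∞}

/-- The image under `q` of `|φ|ᵖ lam`: the measure `μ` on `X` for which `g ↦ (g ∘ q) φ` is an
isometry from `Lᵖ(μ)` to `Lᵖ(lam)`. -/
def weightedImage (p : ℝ≥0∞) (lam : Measure Ω) (q : Ω → X) (φ : Ω → 𝕜) : Measure X :=
  (lam.withDensity fun ω => ‖φ ω‖ₑ ^ p.toReal).map q

lemma isFiniteMeasure_weightedImage (hp0 : p ≠ 0) (hp : p ≠ ∞) (hφ : MemLp φ p lam) :
    IsFiniteMeasure (weightedImage p lam q φ) := by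
  have : IsFiniteMeasure (lam.withDensity fun ω => ‖φ ω‖ₑ ^ p.toReal) :=
    isFiniteMeasure_withDensity
      (lintegral_rpow_enorm_lt_top_of_eLpNorm_lt_top hp0 hp hφ.eLpNorm_lt_top).ne
  exact Measure.isFiniteMeasure_map _ q

lemma comp_mul_ae_eq (hq : Measurable q) (hφ : Measurable φ) {f g : X → 𝕜}
    (h : f =ᵐ[weightedImage p lam q φ] g) :
    (fun ω => f (q ω) * φ ω) =ᵐ[lam] fun ω => g (q ω) * φ ω := by
  have hpull := ae_of_ae_map hq.aemeasurable h
  rw [ae_withDensity_iff (by fun_prop)] at hpull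
  filter_upwards [hpull] with ω hω
  obtain hφω | hφω := eq_or_ne (φ ω) 0
  · rw [hφω, mul_zero, mul_zero]
  · rw [hω fun h0 => hφω ?_]
    simpa using ((ENNReal.rpow_eq_zero_iff.1 h0).resolve_right (by simp)).1

lemma eLpNorm_comp_mul (hp : p ≠ ∞) (hq : Measurable q) (hφ : Measurable φ)
    {f : X → 𝕜} (hf : Measurable f) :
    eLpNorm (fun ω => f (q ω) * φ ω) p lam = eLpNorm f p (weightedImage p lam q φ) := by
  obtain rfl | hp0 := eq_or_ne p 0
  · rw [eLpNorm_exponent_zero, eLpNorm_exponent_zero]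
  rw [eLpNorm_eq_lintegral_rpow_enorm_toReal hp0 hp, eLpNorm_eq_lintegral_rpow_enorm_toReal hp0 hp,
    weightedImage, lintegral_map (by fun_prop) hq,
    lintegral_withDensity_eq_lintegral_mul _ (by fun_prop) (by fun_prop)]
  simp only [Pi.mul_apply, enorm_mul, ENNReal.mul_rpow_of_nonneg _ _ ENNReal.toReal_nonneg,
    mul_comm]

lemma memLp_comp_mul (hp : p ≠ ∞) (hq : Measurable q) (hφ : Measurable φ)
    (g : Lp 𝕜 p (weightedImage p lam q φ)) : MemLp (fun ω => g (q ω) * φ ω) p lam := by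
  have hg := (Lp.stronglyMeasurable g).measurable
  exact ⟨((hg.comp hq).mul hφ).aestronglyMeasurable,
    eLpNorm_comp_mul hp hq hφ hg ▸ Lp.eLpNorm_lt_top g⟩

/-- The isometry `g ↦ (g ∘ q) φ`, which is the map `𝒥` when `q` is evaluation at time `0` and `φ`
is the scaling function. -/
def weightedComp [Fact (1 ≤ p)] (hp : p ≠ ∞) (hq : Measurable q)
    (hφ : Measurable φ) : Lp 𝕜 p (weightedImage p lam q φ) →ₗᵢ[𝕜] Lp 𝕜 p lam where
  toFun g := (memLp_comp_mul hp hq hφ g).toLp _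
  map_add' g g' := by
    rw [← MemLp.toLp_add, MemLp.toLp_eq_toLp_iff]
    filter_upwards [comp_mul_ae_eq hq hφ (Lp.coeFn_add g g')] with ω hω
    simpa only [Pi.add_apply, add_mul] using hω
  map_smul' c g := by
    rw [RingHom.id_apply, ← MemLp.toLp_const_smul, MemLp.toLp_eq_toLp_iff]
    filter_upwards [comp_mul_ae_eq hq hφ (Lp.coeFn_smul c g)] with ω hω
    simpa only [Pi.smul_apply, smul_eq_mul, mul_assoc] using hω
  norm_map' g := by
    change ‖(memLp_comp_mul hp hq hφ g).toLp _‖ = ‖g‖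
    rw [Lp.norm_toLp, Lp.norm_def,
      eLpNorm_comp_mul hp hq hφ (Lp.stronglyMeasurable g).measurable]

lemma dense_setOf_bounded [Fact (1 ≤ p)] (hp : p ≠ ∞) (μ : Measure X) :
    Dense {g : Lp 𝕜 p μ | ∃ f : X → 𝕜, Measurable f ∧ (∃ M : ℝ, ∀ x, ‖f x‖ ≤ M) ∧ g =ᵐ[μ] f} := by
  refine (Lp.simpleFunc.denseRange hp).mono ?_
  rintro _ ⟨s, rfl⟩
  exact ⟨Lp.simpleFunc.toSimpleFunc s, SimpleFunc.measurable _, SimpleFunc.exists_forall_norm_le _,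
    (Lp.simpleFunc.toSimpleFunc_eq_toFun s).symm⟩

variable [Fact (1 ≤ p)] (hp : p ≠ ∞) (hq : Measurable q) (hφ : Measurable φ)

lemma coeFn_weightedComp (g : Lp 𝕜 p (weightedImage p lam q φ)) :
    weightedComp hp hq hφ g =ᵐ[lam] fun ω => g (q ω) * φ ω :=
  (memLp_comp_mul hp hq hφ g).coeFn_toLp

lemma weightedComp_eq_of_ae_eq {f : X → 𝕜} {g : Lp 𝕜 p (weightedImage p lam q φ)}
    (hg : g =ᵐ[weightedImage p lam q φ] f) {ξ : Lp 𝕜 p lam}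
    (hξ : ξ =ᵐ[lam] fun ω => f (q ω) * φ ω) : weightedComp hp hq hφ g = ξ :=
  Lp.ext (((coeFn_weightedComp hp hq hφ g).trans (comp_mul_ae_eq hq hφ hg)).trans hξ.symm)

lemma range_weightedComp (hφp : MemLp φ p lam) {P : (X → 𝕜) → Lp 𝕜 p lam}
    (hP : ∀ f, Measurable f → (∃ M : ℝ, ∀ x, ‖f x‖ ≤ M) → P f =ᵐ[lam] fun ω => f (q ω) * φ ω) :
    Set.range (weightedComp (lam := lam) hp hq hφ) =
      closure {ξ | ∃ f : X → 𝕜, Measurable f ∧ (∃ M : ℝ, ∀ x, ‖f x‖ ≤ M) ∧ ξ = P f} := by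
  have : IsFiniteMeasure (weightedImage p lam q φ) :=
    isFiniteMeasure_weightedImage (one_pos.trans_le Fact.out).ne' hp hφp
  have himage : weightedComp hp hq hφ '' {g : Lp 𝕜 p (weightedImage p lam q φ) | ∃ f : X → 𝕜,
      Measurable f ∧ (∃ M : ℝ, ∀ x, ‖f x‖ ≤ M) ∧ g =ᵐ[weightedImage p lam q φ] f} =
      {ξ | ∃ f : X → 𝕜, Measurable f ∧ (∃ M : ℝ, ∀ x, ‖f x‖ ≤ M) ∧ ξ = P f} := by
    ext ξ
    constructor
    · rintro ⟨g, ⟨f, hf, hb, hg⟩, rfl⟩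
      exact ⟨f, hf, hb, weightedComp_eq_of_ae_eq hp hq hφ hg (hP f hf hb)⟩
    · rintro ⟨f, hf, ⟨M, hM⟩, rfl⟩
      have hfp : MemLp f p (weightedImage p lam q φ) :=
        MemLp.of_bound hf.aestronglyMeasurable M (ae_of_all _ hM)
      exact ⟨hfp.toLp f, ⟨f, hf, ⟨M, hM⟩, hfp.coeFn_toLp⟩,
        weightedComp_eq_of_ae_eq hp hq hφ hfp.coeFn_toLp (hP f hf ⟨M, hM⟩)⟩
  rw [← himage, (weightedComp hp hq hφ).isometry.isClosedEmbedding.closure_image_eq,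
    (dense_setOf_bounded hp _).closure_eq, Set.image_univ]

lemma mul_weightedComp_comp_ae_eq {r : X → X} {T : Ω → Ω} {c : Ω → 𝕜} {m : X → 𝕜}
    (hT : Measure.QuasiMeasurePreserving T lam lam) (hqT : ∀ ω, q (T ω) = r (q ω))
    (hφT : ∀ᵐ ω ∂lam, c ω * φ (T ω) = m (q ω) * φ ω) {g g' : Lp 𝕜 p (weightedImage p lam q φ)}
    (hg' : g' =ᵐ[weightedImage p lam q φ] fun x => m x * g (r x)) :
    (fun ω => c ω * weightedComp hp hq hφ g (T ω)) =ᵐ[lam] weightedComp hp hq hφ g' := by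
  filter_upwards [hT.ae (coeFn_weightedComp hp hq hφ g), coeFn_weightedComp hp hq hφ g',
    comp_mul_ae_eq hq hφ hg', hφT] with ω hgω hgω' hmω hφω
  rw [hgω, hgω', hmω, hqT, mul_left_comm, hφω]
  ring

lemma IsFiberSum.weightedImage_eq_withDensity {X Ω 𝕜 : Type*} [MeasurableSpace X]
    [MeasurableSpace Ω] [RCLike 𝕜] [TopologicalSpace X] [TopologicalSpace.MetrizableSpace X]
    [SecondCountableTopology X] [BorelSpace X] [StandardBorelSpace Ω] {lam : Measure Ω}
    {ρ : Measure X} [SFinite ρ] {N : X → Set Ω} {q : Ω → X} (h : IsFiberSum lam ρ N)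
    (hq : Measurable q) (hNq : ∀ x, ∀ ω ∈ N x, q ω = x) (hN : MeasurableSet (⋃ x, N x))
    {φ ψ : Ω → 𝕜} (hφ : Measurable φ) (hφψ : φ =ᵐ[lam] ψ)
    (hψ : ∀ x, Summable fun ω : N x => ‖ψ ω‖ ^ 2) :
    weightedImage 2 lam q φ = ρ.withDensity fun x => ENNReal.ofReal (∑' ω : N x, ‖ψ ω‖ ^ 2) := by
  rw [weightedImage, h.map_withDensity hq hNq (by fun_prop)]
  refine withDensity_congr_ae ?_
  filter_upwards [h.ae_forall_mem_fiber hq hNq hN hφψ] with x hx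
  rw [ENNReal.ofReal_tsum_of_nonneg (fun _ => by positivity) (hψ x)]
  refine tsum_congr fun ω => ?_
  rw [hx ω ω.2, ENNReal.toReal_ofNat, ENNReal.rpow_ofNat, ENNReal.ofReal_pow (norm_nonneg _),
    ofReal_norm]

end WeightedComposition

section Dynamics

namespace Solenoid

variable {X : Type*} {r : X → X}

lemma iterate_apply (z : Solenoid r) (k : ℕ) (n : ℤ) : r^[k] (z.1 (n + k)) = z.1 n := by
  induction k with
  | zero => rw [Function.iterate_zero_apply, Nat.cast_zero, add_zero]
  | succ k ih =>
    rw [Function.iterate_succ_apply, Nat.cast_succ, ← add_assoc, z.2, ih]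

lemma apply_eq_of_le {z z' : Solenoid r} {m n : ℤ} (hmn : m ≤ n) (h : z.1 n = z'.1 n) :
    z.1 m = z'.1 m := by
  obtain ⟨k, rfl⟩ := Int.le.dest hmn
  rw [← z.iterate_apply k, h, z'.iterate_apply]

lemma eventually_apply_ne {z z' : Solenoid r} (h : z ≠ z') :
    ∀ᶠ n : ℕ in atTop, z.1 n ≠ z'.1 n := by
  obtain ⟨m, hm⟩ := Function.ne_iff.1 (Subtype.coe_ne_coe.2 h)
  filter_upwards [eventually_ge_atTop m.toNat] with n hn hzn
  exact hm (apply_eq_of_le (Int.toNat_le.1 hn) hzn)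

lemma shiftHat_apply (z : Solenoid r) (n : ℤ) : (shiftHat r z).1 n = z.1 (n - 1) := rfl

lemma shiftHat_apply_zero (z : Solenoid r) : (shiftHat r z).1 0 = r (z.1 0) :=
  (z.2 (0 - 1)).symm.trans (by rw [sub_add_cancel])

section Measurability

variable [MeasurableSpace X]

lemma standardBorelSpace [StandardBorelSpace X] (hr : Measurable r) :
    StandardBorelSpace (Solenoid r) := by
  have hmeas : MeasurableSet {z : ℤ → X | ∀ n : ℤ, r (z (n + 1)) = z n} := by
    rw [Set.ofPred_forall]
    exact MeasurableSet.iInter fun n =>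
      measurableSet_eq_fun (hr.comp (measurable_pi_apply _)) (measurable_pi_apply _)
  exact hmeas.standardBorel

lemma measurable_apply (n : ℤ) : Measurable fun z : Solenoid r => z.1 n :=
  (measurable_pi_apply n).comp measurable_subtype_coe

lemma measurable_shiftHat : Measurable (shiftHat r) :=
  (measurable_pi_lambda _ fun n => measurable_apply (n - 1)).subtype_mk

end Measurability

variable {p : ℕ} {xc : ZMod p → X}

/-- `z` converges to the cycle `xc` with index `i = i(z)`: its values at the multiples of the
period tend to `xc i`. -/
def TendstoCycle [TopologicalSpace X] (xc : ZMod p → X) (z : Solenoid r) (i : ZMod p) : Prop :=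
  Tendsto (fun n : ℕ => z.1 ((p : ℤ) * (n : ℤ))) atTop (𝓝 (xc i))

lemma measurableSet_iUnion_NC [NeZero p] [TopologicalSpace X]
    [TopologicalSpace.PseudoMetrizableSpace X] [MeasurableSpace X] [BorelSpace X] :
    MeasurableSet (⋃ x, NC r xc x) := by
  have hunion : ⋃ x, NC r xc x = {z : Solenoid r | ∃ i, z.TendstoCycle xc i} := by
    ext z
    simp [NC, TendstoCycle]
  rw [hunion, Set.ofPred_exists]
  exact MeasurableSet.iUnion fun i => measurableSet_tendsto _ fun n => measurable_apply _

variable [TopologicalSpace X] {z : Solenoid r} {i : ZMod p}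

lemma TendstoCycle.sub (hz : z.TendstoCycle xc i) (hcyc : ∀ i, r (xc (i + 1)) = xc i)
    (hrc : ∀ i, ContinuousAt r (xc i)) (j : ℕ) :
    Tendsto (fun n : ℕ => z.1 ((p : ℤ) * n - j)) atTop (𝓝 (xc (i - j))) := by
  induction j with
  | zero => simpa only [Nat.cast_zero, sub_zero, TendstoCycle] using hz
  | succ j ih =>
    have hnext := (hrc (i - j)).tendsto.comp ih
    rw [← sub_add_cancel (i - (j : ZMod p)) 1, hcyc, sub_sub, ← Nat.cast_succ] at hnext
    refine hnext.congr fun n => ?_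
    rw [Function.comp_apply, Nat.cast_succ, ← sub_sub, ← z.2 (_ - 1), sub_add_cancel]

lemma TendstoCycle.shiftHat (hz : z.TendstoCycle xc i) (hcyc : ∀ i, r (xc (i + 1)) = xc i)
    (hrc : ∀ i, ContinuousAt r (xc i)) : (shiftHat r z).TendstoCycle xc (i - 1) := by
  simpa only [Nat.cast_one, TendstoCycle, shiftHat_apply] using hz.sub hcyc hrc 1

lemma shiftHat_mem_NC {x : X} (hz : z ∈ NC r xc x) (hcyc : ∀ i, r (xc (i + 1)) = xc i)
    (hrc : ∀ i, ContinuousAt r (xc i)) : shiftHat r z ∈ NC r xc (r x) := by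
  obtain ⟨rfl, i, hi⟩ := hz
  exact ⟨z.shiftHat_apply_zero, i - 1, TendstoCycle.shiftHat hi hcyc hrc⟩

-- Advancing by `j` amounts to going back by `(p - 1) j` from a time which is `j` periods later.
lemma TendstoCycle.add [NeZero p] (hz : z.TendstoCycle xc i) (hcyc : ∀ i, r (xc (i + 1)) = xc i)
    (hrc : ∀ i, ContinuousAt r (xc i)) (j : ℕ) :
    Tendsto (fun n : ℕ => z.1 ((p * n + j : ℕ) : ℤ)) atTop (𝓝 (xc (i + j))) := by
  have hcast : ((p - 1 : ℕ) : ℤ) = p - 1 := Nat.cast_pred (NeZero.pos p)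
  have hcast' : ((p - 1 : ℕ) : ZMod p) = -1 := by
    rw [Nat.cast_pred (NeZero.pos p), ZMod.natCast_self, zero_sub]
  have hback := (hz.sub hcyc hrc ((p - 1) * j)).comp (tendsto_add_atTop_nat j)
  rw [Nat.cast_mul (α := ZMod p), hcast', neg_one_mul, sub_neg_eq_add] at hback
  refine hback.congr fun n => ?_
  have htime : (p : ℤ) * (n + j : ℕ) - ((p - 1) * j : ℕ) = (p * n + j : ℕ) := by
    push_cast [hcast]
    ring
  rw [Function.comp_apply, htime]

end Solenoid

lemma eventually_of_residues {p : ℕ} [NeZero p] {P : ℕ → Prop}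
    (h : ∀ j : ℕ, ∀ᶠ n : ℕ in atTop, P (p * n + j)) : ∀ᶠ k in atTop, P k := by
  have hall : ∀ᶠ n : ℕ in atTop, ∀ j ∈ Finset.range p, P (p * n + j) :=
    (eventually_all_finset _).2 fun j _ => h j
  filter_upwards [(Nat.tendsto_div_const_atTop (NeZero.ne p)).eventually hall] with k hk
  rw [← Nat.div_add_mod k p]
  exact hk _ (Finset.mem_range.2 (Nat.mod_lt _ (NeZero.pos p)))

lemma summable_of_residues {p : ℕ} [NeZero p] {u : ℕ → ℝ} (hu : ∀ n, 0 ≤ u n)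
    (h : ∀ j : ℕ, Summable fun n : ℕ => u (p * n + j)) : Summable u := by
  rw [← (Nat.divModEquiv p).symm.summable_iff, ← (Equiv.prodComm _ _).summable_iff]
  refine (summable_prod_of_nonneg fun _ => hu _).2 ⟨fun j => (h j).congr fun n => ?_,
    (hasSum_fintype _).summable⟩
  simp [mul_comm]

lemma Solenoid.TendstoCycle.eventually {X : Type*} [TopologicalSpace X] {r : X → X} {p : ℕ}
    [NeZero p] {xc : ZMod p → X} {z : Solenoid r} {i : ZMod p} (hz : z.TendstoCycle xc i)
    (hcyc : ∀ i, r (xc (i + 1)) = xc i) (hrc : ∀ i, ContinuousAt r (xc i))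
    {Q : ZMod p → X → Prop} (hQ : ∀ i, ∀ᶠ y in 𝓝 (xc i), Q i y) :
    ∀ᶠ k : ℕ in atTop, Q (i + k) (z.1 k) := by
  refine eventually_of_residues (p := p) fun j => ?_
  filter_upwards [(hz.add hcyc hrc j).eventually (hQ (i + j))] with n hn
  simpa using hn

lemma Solenoid.index_shiftHat {X : Type*} [TopologicalSpace X] [T2Space X] {r : X → X} {p : ℕ}
    {xc : ZMod p → X} {ι : Solenoid r → ZMod p} (hxc : Function.Injective xc)
    (hι : ∀ x, ∀ z ∈ NC r xc x, z.TendstoCycle xc (ι z)) (hcyc : ∀ i, r (xc (i + 1)) = xc i)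
    (hrc : ∀ i, ContinuousAt r (xc i)) {x : X} {z : Solenoid r} (hz : z ∈ NC r xc x) :
    ι (shiftHat r z) = ι z - 1 :=
  hxc (tendsto_nhds_unique (hι _ _ (Solenoid.shiftHat_mem_NC hz hcyc hrc))
    ((hι x z hz).shiftHat hcyc hrc))

end Dynamics

section RepellingCycles

variable {X : Type*} [PseudoMetricSpace X]

/-- Near `a`, the map `f` increases the distance to `a` by a factor bounded away from `1`. -/
def IsRepelling (f : X → X) (a : X) : Prop :=
  ∃ c δ : ℝ, 0 < c ∧ c < 1 ∧ 0 < δ ∧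
    ∀ x : X, 0 < dist x a → dist x a < δ → c⁻¹ * dist x a < dist (f x) a

/-- A modulus of continuity which is summable along every geometric sequence. -/
structure IsDiniModulus (β : ℝ → ℝ) : Prop where
  monotoneOn : MonotoneOn β (Set.Ici 0)
  zero_nonneg : 0 ≤ β 0
  summable : ∀ A : ℝ, 0 < A → ∀ c : ℝ, 0 < c → c < 1 → Summable fun k : ℕ => β (A * c ^ (k + 1))

lemma IsDiniModulus.nonneg {β : ℝ → ℝ} (hβ : IsDiniModulus β) {t : ℝ} (ht : 0 ≤ t) : 0 ≤ β t :=
  hβ.zero_nonneg.trans (hβ.monotoneOn Set.self_mem_Ici ht ht)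

lemma IsDiniModulus.summable_comp {β : ℝ → ℝ} (hβ : IsDiniModulus β) {d : ℕ → ℝ}
    (hd : ∀ n, 0 ≤ d n) {c : ℝ} (hc0 : 0 < c) (hc1 : c < 1)
    (hdc : ∀ᶠ n in atTop, d (n + 1) ≤ c * d n) : Summable fun n => β (d n) := by
  obtain ⟨N, hN⟩ := eventually_atTop.1 hdc
  have hA : 0 < (d N + 1) / c := div_pos (by linarith [hd N]) hc0
  rw [← summable_nat_add_iff N]
  refine (hβ.summable _ hA c hc0 hc1).of_nonneg_of_le (fun m => hβ.nonneg (hd _)) fun m => ?_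
  have hgeom : d (m + N) ≤ (d N + 1) / c * c ^ (m + 1) := calc
    d (m + N) ≤ c ^ m * d (0 + N) :=
      le_geom (u := fun k => d (k + N)) hc0.le m fun k _ => by
        simpa only [add_right_comm] using hN (k + N) (Nat.le_add_left N k)
    _ ≤ c ^ m * (d N + 1) := by rw [zero_add]; gcongr; linarith
    _ = (d N + 1) / c * c ^ (m + 1) := by rw [pow_succ]; field_simp
  exact hβ.monotoneOn (hd _) ((hd _).trans hgeom) hgeom

lemma IsRepelling.summable_dist {f : X → X} {a : X} (ha : IsRepelling f a) {β : ℝ → ℝ}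
    (hβ : IsDiniModulus β) {y : ℕ → X} (hy : ∀ n, f (y (n + 1)) = y n)
    (hya : Tendsto y atTop (𝓝 a)) : Summable fun n => β (dist (y n) a) := by
  obtain ⟨c, δ, hc0, hc1, hδ, hexp⟩ := ha
  refine hβ.summable_comp (fun n => dist_nonneg) hc0 hc1 ?_
  filter_upwards [(tendsto_add_atTop_iff_nat 1).2 hya |>.eventually (Metric.ball_mem_nhds a hδ)]
    with n hn
  obtain h0 | h0 := (dist_nonneg (x := y (n + 1)) (y := a)).eq_or_lt
  · exact h0 ▸ mul_nonneg hc0.le dist_nonneg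
  · rw [← hy n, ← inv_mul_le_iff₀ hc0]
    exact (hexp _ h0 hn).le

lemma Solenoid.TendstoCycle.summable_dist {r : X → X} {p : ℕ} [NeZero p] {xc : ZMod p → X}
    {z : Solenoid r} {i : ZMod p} (hz : z.TendstoCycle xc i)
    (hcyc : ∀ i, r (xc (i + 1)) = xc i) (hrc : ∀ i, ContinuousAt r (xc i))
    (hrep : ∀ i, IsRepelling r^[p] (xc i)) {β : ℝ → ℝ} (hβ : IsDiniModulus β) :
    Summable fun k : ℕ => β (dist (z.1 k) (xc (i + k))) := by
  refine summable_of_residues (p := p) (fun k => hβ.nonneg dist_nonneg) fun j => ?_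
  have hback : ∀ n : ℕ, r^[p] (z.1 ((p * (n + 1) + j : ℕ) : ℤ)) = z.1 ((p * n + j : ℕ) : ℤ) :=
    fun n => by
      have htime : ((p * (n + 1) + j : ℕ) : ℤ) = (p * n + j : ℕ) + p := by push_cast; ring
      rw [htime, z.iterate_apply]
  simpa using (hrep (i + j)).summable_dist hβ hback (hz.add hcyc hrc j)

end RepellingCycles

section ProductFormula

variable {X : Type*} {r : X → X} {p : ℕ} {α : ZMod p → ℂ} {m0 : X → ℂ}

/-- The quadrature mirror filter condition: the average of `|m0|²` over every fiber of `r` is `1`.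
Because of the value `0` given to `Nat.card` on infinite types, it forces every fiber to be finite
and nonempty. -/
def QuadratureCondition (r : X → X) (m0 : X → ℂ) : Prop :=
  ∀ x : X, (Nat.card (r ⁻¹' {x}) : ℝ)⁻¹ * ∑' y : r ⁻¹' {x}, ‖m0 y.1‖ ^ 2 = 1

lemma QuadratureCondition.card_ne_zero (hm0 : QuadratureCondition r m0) (x : X) :
    Nat.card (r ⁻¹' {x}) ≠ 0 := by
  intro h
  simpa [h] using hm0 x

/-- The factor `α_j⁻¹ m0(y) / √#r⁻¹(r(y))` of the infinite product defining the scaling function. -/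
def normalizedFilter (r : X → X) (α : ZMod p → ℂ) (m0 : X → ℂ) (j : ZMod p) (y : X) : ℂ :=
  (α j)⁻¹ * m0 y / (Real.sqrt (Nat.card (r ⁻¹' {r y})) : ℂ)

lemma norm_normalizedFilter_sq (hα : ∀ i, ‖α i‖ = 1) (j : ZMod p) (y : X) :
    ‖normalizedFilter r α m0 j y‖ ^ 2 = ‖m0 y‖ ^ 2 / Nat.card (r ⁻¹' {r y}) := by
  rw [normalizedFilter, norm_div, norm_mul, norm_inv, hα, inv_one, one_mul, Complex.norm_real,
    div_pow, Real.norm_eq_abs, sq_abs, Real.sq_sqrt (Nat.cast_nonneg _)]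

lemma mul_normalizedFilter (hm0 : QuadratureCondition r m0) (hα : ∀ i, ‖α i‖ = 1) (j : ZMod p)
    (y : X) :
    α j * (Real.sqrt (Nat.card (r ⁻¹' {r y})) : ℂ) * normalizedFilter r α m0 j y = m0 y := by
  have hαj : α j ≠ 0 := norm_ne_zero_iff.1 (by rw [hα]; exact one_ne_zero)
  have hsqrt : (Real.sqrt (Nat.card (r ⁻¹' {r y})) : ℂ) ≠ 0 := by
    rw [Complex.ofReal_ne_zero, Real.sqrt_ne_zero (Nat.cast_nonneg _)]
    exact_mod_cast hm0.card_ne_zero (r y)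
  rw [normalizedFilter]
  field_simp

lemma norm_normalizedFilter_sub_one_le (hm0 : QuadratureCondition r m0) (hα : ∀ i, ‖α i‖ = 1)
    {j : ZMod p} {a y : X} (hcard : Nat.card (r ⁻¹' {r y}) = Nat.card (r ⁻¹' {r a}))
    (ha : m0 a = α j * (Real.sqrt (Nat.card (r ⁻¹' {r a})) : ℂ)) :
    ‖normalizedFilter r α m0 j y - 1‖ ≤ ‖m0 y - m0 a‖ := by
  have hsqrt : 1 ≤ Real.sqrt (Nat.card (r ⁻¹' {r y})) :=
    Real.one_le_sqrt.2 (Nat.one_le_cast.2 (Nat.one_le_iff_ne_zero.2 (hm0.card_ne_zero (r y))))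
  have hfactor : m0 y - m0 a = α j * (Real.sqrt (Nat.card (r ⁻¹' {r y})) : ℂ) *
      (normalizedFilter r α m0 j y - 1) := by
    rw [mul_sub, mul_normalizedFilter hm0 hα, mul_one, ha, hcard]
  rw [hfactor, norm_mul, norm_mul, hα, one_mul, Complex.norm_real, Real.norm_eq_abs]
  exact le_mul_of_one_le_left (norm_nonneg _) (hsqrt.trans (le_abs_self _))

lemma scalingFn_eq_tprod (ι : Solenoid r → ZMod p) (z : Solenoid r) :
    scalingFn r α ι m0 z =
      ∏' k : ℕ, normalizedFilter r α m0 (ι z + ((k + 1 : ℕ) : ZMod p)) (z.1 ((k : ℤ) + 1)) := rfl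

lemma Solenoid.TendstoCycle.multipliable_normalizedFilter {X : Type*} [PseudoMetricSpace X]
    {r : X → X} {m0 : X → ℂ} [NeZero p] {xc : ZMod p → X} {z : Solenoid r} {i : ZMod p}
    (hz : z.TendstoCycle xc i) (hcyc : ∀ i, r (xc (i + 1)) = xc i)
    (hrep : ∀ i, IsRepelling r^[p] (xc i)) (hrc : ∀ i, ContinuousAt r (xc i))
    (hcc : ∀ i, ∀ᶠ y in 𝓝 (xc i), Nat.card (r ⁻¹' {y}) = Nat.card (r ⁻¹' {xc i}))
    {β : ℝ → ℝ} (hβ : IsDiniModulus β)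
    (hβlip : ∀ i, ∀ᶠ y in 𝓝 (xc i), ‖m0 y - m0 (xc i)‖ ≤ β (dist y (xc i)))
    (hm0 : QuadratureCondition r m0) (hα : ∀ i, ‖α i‖ = 1)
    (hlp : ∀ i, m0 (xc i) = α i * (Real.sqrt (Nat.card (r ⁻¹' {r (xc i)})) : ℂ)) :
    Multipliable fun k : ℕ =>
      normalizedFilter r α m0 (i + ((k + 1 : ℕ) : ZMod p)) (z.1 ((k : ℤ) + 1)) := by
  have hcard : ∀ i, ∀ᶠ y in 𝓝 (xc i),
      Nat.card (r ⁻¹' {r y}) = Nat.card (r ⁻¹' {r (xc i)}) := fun i => by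
    have hri : r (xc i) = xc (i - 1) := by rw [← hcyc (i - 1), sub_add_cancel]
    have hcci := hcc (i - 1)
    rw [← hri] at hcci
    exact (hrc i).eventually hcci
  have hsummable : Summable fun k : ℕ => ‖normalizedFilter r α m0 (i + k) (z.1 k) - 1‖ := by
    refine Summable.of_norm_bounded_eventually_nat (hz.summable_dist hcyc hrc hrep hβ) ?_
    filter_upwards [hz.eventually hcyc hrc fun i => (hβlip i).and (hcard i)] with k hk
    rw [norm_norm]
    exact (norm_normalizedFilter_sub_one_le hm0 hα hk.2 (hlp _)).trans hk.1
  have htail := (summable_nat_add_iff 1).2 hsummable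
  simpa only [add_sub_cancel, Nat.cast_succ] using multipliable_one_add_of_summable htail

lemma scalingFn_shiftHat {ι : Solenoid r → ZMod p} {z : Solenoid r}
    (hι : ι (shiftHat r z) = ι z - 1)
    (hz : Multipliable fun k : ℕ =>
      normalizedFilter r α m0 (ι z + ((k + 1 : ℕ) : ZMod p)) (z.1 ((k : ℤ) + 1))) :
    scalingFn r α ι m0 (shiftHat r z) =
      normalizedFilter r α m0 (ι z) (z.1 0) * scalingFn r α ι m0 z := by
  have hindex : ∀ k : ℕ, ι z - 1 + ((k + 1 : ℕ) : ZMod p) = ι z + k := fun k => by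
    push_cast
    ring
  simp only [scalingFn_eq_tprod, hι, hindex, z.shiftHat_apply, add_sub_cancel_right]
  rw [tprod_eq_zero_mul' (by simpa using hz)]
  simp

end ProductFormula

section TransitionWeights

variable {X : Type*} {r : X → X} {w : X → ℝ}

/-- The weights `w y` of the backward steps `r y ↝ y` have total mass at most `1` at every point. -/
structure IsSubMarkov (r : X → X) (w : X → ℝ) : Prop where
  nonneg : ∀ y, 0 ≤ w y
  sum_le_one : ∀ (x : X) (Y : Finset X), (∀ y ∈ Y, r y = x) → ∑ y ∈ Y, w y ≤ 1

lemma QuadratureCondition.isSubMarkov {m0 : X → ℂ} (hm0 : QuadratureCondition r m0) :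
    IsSubMarkov r fun y => ‖m0 y‖ ^ 2 / Nat.card (r ⁻¹' {r y}) where
  nonneg y := by positivity
  sum_le_one x Y hY := by
    have : Finite (r ⁻¹' {x}) := (Nat.card_ne_zero.1 (hm0.card_ne_zero x)).2
    have hcongr : ∑ y ∈ Y, ‖m0 y‖ ^ 2 / Nat.card (r ⁻¹' {r y}) =
        (Nat.card (r ⁻¹' {x}) : ℝ)⁻¹ * ∑ y ∈ Y, ‖m0 y‖ ^ 2 := by
      rw [Finset.mul_sum]
      exact Finset.sum_congr rfl fun y hy => by rw [hY y hy, div_eq_inv_mul]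
    rw [hcongr, ← hm0 x]
    gcongr
    classical
    rw [← Finset.sum_subtype_of_mem (p := (· ∈ r ⁻¹' {x})) (fun y => ‖m0 y‖ ^ 2) hY]
    exact (Summable.of_finite).sum_le_tsum _ fun _ _ => by positivity

namespace IsSubMarkov

lemma sum_prod_iterate_le_one (hw : IsSubMarkov r w) (x : X) (n : ℕ) :
    ∀ Y : Finset X, (∀ y ∈ Y, r^[n] y = x) →
      ∑ y ∈ Y, ∏ j ∈ Finset.range n, w (r^[j] y) ≤ 1 := by
  classical
  induction n with
  | zero =>
    intro Y hY
    have hcard : Y.card ≤ 1 :=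
      Finset.card_le_one.2 fun a ha b hb => (hY a ha).trans (hY b hb).symm
    simpa using hcard
  | succ n ih =>
    intro Y hY
    have hmaps : ∀ y ∈ Y, r y ∈ Y.image r := fun y => Finset.mem_image_of_mem r
    have hfiber : ∀ u, ∑ y ∈ Y with r y = u, ∏ j ∈ Finset.range (n + 1), w (r^[j] y) =
        (∏ j ∈ Finset.range n, w (r^[j] u)) * ∑ y ∈ Y with r y = u, w y := fun u => by
      rw [Finset.mul_sum]
      refine Finset.sum_congr rfl fun y hy => ?_
      rw [Finset.prod_range_succ', ← (Finset.mem_filter.1 hy).2]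
      rfl
    calc ∑ y ∈ Y, ∏ j ∈ Finset.range (n + 1), w (r^[j] y)
        = ∑ u ∈ Y.image r, (∏ j ∈ Finset.range n, w (r^[j] u)) * ∑ y ∈ Y with r y = u, w y := by
          rw [← Finset.sum_fiberwise_of_maps_to hmaps]
          exact Finset.sum_congr rfl fun u _ => hfiber u
      _ ≤ ∑ u ∈ Y.image r, ∏ j ∈ Finset.range n, w (r^[j] u) :=
          Finset.sum_le_sum fun u _ =>
            mul_le_of_le_one_right (Finset.prod_nonneg fun _ _ => hw.nonneg _)
              (hw.sum_le_one u _ fun y hy => (Finset.mem_filter.1 hy).2)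
      _ ≤ 1 := ih _ (Finset.forall_mem_image.2 hY)

-- Distinct paths have distinct positions at all large times `n`, so that the partial products are
-- weights of distinct `n`-step walks from `x`.
lemma sum_le_one_of_tendsto_prod (hw : IsSubMarkov r w) (x : X) {F : Solenoid r → ℝ}
    (S : Finset (Solenoid r)) (hS : ∀ z ∈ S, z.1 0 = x)
    (hF : ∀ z ∈ S,
      Tendsto (fun n => ∏ k ∈ Finset.range n, w (z.1 ((k : ℤ) + 1))) atTop (𝓝 (F z))) :
    ∑ z ∈ S, F z ≤ 1 := by
  classical
  have hinj : ∀ᶠ n : ℕ in atTop, Set.InjOn (fun z : Solenoid r => z.1 n) S := by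
    simp only [Set.InjOn, Finset.mem_coe, eventually_all_finset]
    intro z _ z' _
    obtain rfl | hne := eq_or_ne z z'
    · exact Eventually.of_forall fun _ _ => rfl
    · exact (Solenoid.eventually_apply_ne hne).mono fun _ hn h => absurd h hn
  refine le_of_tendsto (tendsto_finsetSum S hF) ?_
  filter_upwards [hinj] with n hn
  have hreverse : ∀ z : Solenoid r, ∏ k ∈ Finset.range n, w (z.1 ((k : ℤ) + 1)) =
      ∏ j ∈ Finset.range n, w (r^[j] (z.1 n)) := fun z => by
    rw [← Finset.prod_range_reflect]
    refine Finset.prod_congr rfl fun j hj => ?_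
    have htime : (n : ℤ) = ((n - 1 - j : ℕ) : ℤ) + 1 + j := by
      have := Finset.mem_range.1 hj
      omega
    rw [htime, z.iterate_apply]
  rw [Finset.sum_congr rfl fun z _ => hreverse z,
    ← Finset.sum_image (g := fun z : Solenoid r => z.1 n)
      (f := fun y => ∏ j ∈ Finset.range n, w (r^[j] y)) hn]
  refine hw.sum_prod_iterate_le_one x n _ (Finset.forall_mem_image.2 fun z hz => ?_)
  rw [← hS z hz, ← z.iterate_apply n 0, zero_add]

end IsSubMarkov

lemma summable_norm_scalingFn_sq {m0 : X → ℂ} {p : ℕ} {α : ZMod p → ℂ} {ι : Solenoid r → ZMod p}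
    {x : X} {N : Set (Solenoid r)} (hm0 : QuadratureCondition r m0) (hα : ∀ i, ‖α i‖ = 1)
    (hN : ∀ z ∈ N, z.1 0 = x)
    (hmult : ∀ z ∈ N, Multipliable fun k : ℕ =>
      normalizedFilter r α m0 (ι z + ((k + 1 : ℕ) : ZMod p)) (z.1 ((k : ℤ) + 1))) :
    Summable fun z : N => ‖scalingFn r α ι m0 z‖ ^ 2 := by
  refine summable_of_sum_le (c := 1) (fun _ => by positivity) fun T => ?_
  refine (Finset.sum_map T (Function.Embedding.subtype _)
    fun z => ‖scalingFn r α ι m0 z‖ ^ 2).symm.trans_le ?_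
  refine hm0.isSubMarkov.sum_le_one_of_tendsto_prod x _ ?_ ?_ <;>
    intro z hz <;> obtain ⟨ω, -, rfl⟩ := Finset.mem_map.1 hz
  · exact hN ω ω.2
  · refine ((hmult ω ω.2).tendsto_prod_tprod_nat.norm.pow 2).congr fun n => ?_
    rw [norm_prod, ← Finset.prod_pow]
    exact Finset.prod_congr rfl fun k _ => norm_normalizedFilter_sq hα _ _

end TransitionWeights

lemma measurePreserving_of_strongInvariance {X : Type*} [MeasurableSpace X] {r : X → X}
    {ρ : Measure X} [IsFiniteMeasure ρ] (hr : Measurable r)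
    (hcard : ∀ x, Nat.card (r ⁻¹' {x}) ≠ 0)
    (hsi : ∀ f : X → ℝ, Measurable f → (∃ M : ℝ, ∀ x, |f x| ≤ M) →
      ∫ x, f x ∂ρ = ∫ x, (Nat.card (r ⁻¹' {x}) : ℝ)⁻¹ * ∑' y : r ⁻¹' {x}, f y.1 ∂ρ) :
    MeasurePreserving r ρ ρ := by
  refine ⟨hr, Measure.ext fun B hB => ?_⟩
  have havg : ∀ x, (Nat.card (r ⁻¹' {x}) : ℝ)⁻¹ *
      ∑' y : r ⁻¹' {x}, (r ⁻¹' B).indicator 1 y.1 = B.indicator (1 : X → ℝ) x := fun x => by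
    have hconst : ∀ y : r ⁻¹' {x}, (r ⁻¹' B).indicator (1 : X → ℝ) y = B.indicator 1 x :=
      fun y => congrArg (B.indicator 1) y.2
    rw [tsum_congr hconst, _root_.tsum_const, nsmul_eq_mul,
      inv_mul_cancel_left₀ (Nat.cast_ne_zero.2 (hcard x))]
  have hbound : ∃ M : ℝ, ∀ x, |(r ⁻¹' B).indicator (1 : X → ℝ) x| ≤ M :=
    ⟨1, fun x => by by_cases hx : x ∈ r ⁻¹' B <;> simp [hx]⟩
  have hmean := hsi _ (measurable_one.indicator (hr hB)) hbound
  simp only [havg] at hmean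
  rw [integral_indicator_one (hr hB), integral_indicator_one hB] at hmean
  rw [Measure.map_apply hr hB]
  exact (measureReal_eq_measureReal_iff).1 hmean

theorem statement13_general
    {X : Type*} [MetricSpace X] [PolishSpace X] [MeasurableSpace X] [BorelSpace X]
    (r : X → X) (ρ : Measure X) [SFinite ρ] (hr : Measure.QuasiMeasurePreserving r ρ ρ)
    {p : ℕ} [NeZero p] (xc : ZMod p → X) (hxc : Function.Injective xc)
    (hcyc : ∀ i : ZMod p, r (xc (i + 1)) = xc i)
    (lamC : Measure (Solenoid r)) (hlam : IsFiberSum lamC ρ (NC r xc))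
    (α : ZMod p → ℂ) (hα : ∀ i, ‖α i‖ = 1)
    (ι : Solenoid r → ZMod p) (hι : ∀ x, ∀ z ∈ NC r xc x, z.TendstoCycle xc (ι z))
    (hrep : ∀ i, IsRepelling r^[p] (xc i)) (hrc : ∀ i, ContinuousAt r (xc i))
    (hcc : ∀ i, ∀ᶠ y in 𝓝 (xc i), Nat.card (r ⁻¹' {y}) = Nat.card (r ⁻¹' {xc i}))
    (m0 : X → ℂ) (β : ℝ → ℝ) (hβ : IsDiniModulus β)
    (hβlip : ∀ i, ∀ᶠ y in 𝓝 (xc i), ‖m0 y - m0 (xc i)‖ ≤ β (dist y (xc i)))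
    (hqmf : QuadratureCondition r m0)
    (hlp : ∀ i, m0 (xc i) = α i * (Real.sqrt (Nat.card (r ⁻¹' {r (xc i)})) : ℂ))
    (U : Lp ℂ 2 lamC → Lp ℂ 2 lamC)
    (hU : ∀ ξ : Lp ℂ 2 lamC, ⇑(U ξ) =ᵐ[lamC]
      fun z => α (ι z) * (Real.sqrt (Nat.card (r ⁻¹' {r (z.1 0)})) : ℂ) * ξ (shiftHat r z))
    (π : (X → ℂ) → Lp ℂ 2 lamC → Lp ℂ 2 lamC)
    (hπ : ∀ f : X → ℂ, Measurable f → (∃ M : ℝ, ∀ x, ‖f x‖ ≤ M) →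
      ∀ ξ : Lp ℂ 2 lamC, ⇑(π f ξ) =ᵐ[lamC] fun z => f (z.1 0) * ξ z)
    (φ : Lp ℂ 2 lamC) (hφ : ⇑φ =ᵐ[lamC] scalingFn r α ι m0) :
    ∀ μh : Measure X,
      μh = ρ.withDensity (fun x =>
        ENNReal.ofReal (∑' ω : NC r xc x, ‖scalingFn r α ι m0 ω.1‖ ^ 2)) →
      ∀ V0 : Set (Lp ℂ 2 lamC),
        V0 = closure {ξ : Lp ℂ 2 lamC |
          ∃ f : X → ℂ, Measurable f ∧ (∃ M : ℝ, ∀ x, ‖f x‖ ≤ M) ∧ ξ = π f φ} →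
        ∃ J : Lp ℂ 2 μh →ₗᵢ[ℂ] Lp ℂ 2 lamC,
          (∀ f : X → ℂ, Measurable f → (∃ M : ℝ, ∀ x, ‖f x‖ ≤ M) →
            ∀ g : Lp ℂ 2 μh, ⇑g =ᵐ[μh] f → J g = π f φ) ∧
          Set.range (fun g : Lp ℂ 2 μh => J g) = V0 ∧
          (∀ g g' : Lp ℂ 2 μh,
            ⇑g' =ᵐ[μh] (fun x => m0 x * g (r x)) → U (J g) = J g') := by
  have := Solenoid.standardBorelSpace hr.measurable
  have htop : (2 : ℝ≥0∞) ≠ ∞ := ENNReal.ofNat_ne_top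
  have hq := Solenoid.measurable_apply (r := r) 0
  have hφm := (Lp.stronglyMeasurable φ).measurable
  have hNq : ∀ x, ∀ z ∈ NC r xc x, z.1 0 = x := fun x z hz => hz.1
  have hN := Solenoid.measurableSet_iUnion_NC (r := r) (xc := xc)
  have hmult : ∀ x, ∀ z ∈ NC r xc x, Multipliable fun k : ℕ =>
      normalizedFilter r α m0 (ι z + ((k + 1 : ℕ) : ZMod p)) (z.1 ((k : ℤ) + 1)) := fun x z hz =>
    (hι x z hz).multipliable_normalizedFilter hcyc hrep hrc hcc hβ hβlip hqmf hα hlp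
  have hshift := hlam.quasiMeasurePreserving hq hNq hN hr Solenoid.measurable_shiftHat
    fun x z hz => Solenoid.shiftHat_mem_NC hz hcyc hrc
  have hrefine : ∀ᵐ z ∂lamC, α (ι z) * (Real.sqrt (Nat.card (r ⁻¹' {r (z.1 0)})) : ℂ) *
      φ (shiftHat r z) = m0 (z.1 0) * φ z := by
    filter_upwards [hlam.ae_mem_iUnion hN, hφ, hshift.ae hφ] with z hz hφz hφz'
    obtain ⟨x, hx⟩ := Set.mem_iUnion.1 hz
    rw [hφz, hφz', scalingFn_shiftHat (Solenoid.index_shiftHat hxc hι hcyc hrc hx) (hmult x z hx),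
      ← mul_assoc, mul_normalizedFilter hqmf hα]
  rintro _ rfl _ rfl
  rw [← hlam.weightedImage_eq_withDensity hq hNq hN hφm hφ fun x =>
    summable_norm_scalingFn_sq hqmf hα (hNq x) (hmult x)]
  exact ⟨weightedComp htop hq hφm,
    fun f hf hb g hg => weightedComp_eq_of_ae_eq htop hq hφm hg (hπ f hf hb φ),
    range_weightedComp htop hq hφm (Lp.memLp φ) fun f hf hb => hπ f hf hb φ,
    fun g g' hg' => Lp.ext ((hU _).trans
      (mul_weightedComp_comp_ae_eq htop hq hφm hshift Solenoid.shiftHat_apply_zero hrefine hg'))⟩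

theorem statement13
    {X : Type*} [MetricSpace X] [CompactSpace X] [MeasurableSpace X] [BorelSpace X]
    (r : X → X) (hr : Measurable r)
    (hfin : ∀ x : X, (r ⁻¹' {x}).Finite) (hne : ∀ x : X, (r ⁻¹' {x}).Nonempty)
    (ρ : Measure X) [IsProbabilityMeasure ρ]
    (hsi : ∀ f : X → ℝ, Measurable f → (∃ M : ℝ, ∀ x, |f x| ≤ M) →
      ∫ x, f x ∂ρ = ∫ x, (Nat.card (r ⁻¹' {x}) : ℝ)⁻¹ * ∑' y : r ⁻¹' {x}, f y.1 ∂ρ)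
    {p : ℕ} (hp : 0 < p) (xc : ZMod p → X) (hxc : Function.Injective xc)
    (hcyc : ∀ i : ZMod p, r (xc (i + 1)) = xc i)
    (lamC : Measure (Solenoid r))
    (hlam : ∀ F : Solenoid r → ℝ≥0∞, Measurable F →
      ∫⁻ z, F z ∂lamC = ∫⁻ x, ∑' ω : NC r xc x, F ω.1 ∂ρ)
    (α : ZMod p → ℂ) (hα : ∀ i, ‖α i‖ = 1)
    (ι : Solenoid r → ZMod p)
    (hι : ∀ x : X, ∀ ω ∈ NC r xc x,
      Tendsto (fun n : ℕ => ω.1 ((p : ℤ) * (n : ℤ))) atTop (𝓝 (xc (ι ω))))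
    (hrep : ∀ i : ZMod p, ∃ c δ : ℝ, 0 < c ∧ c < 1 ∧ 0 < δ ∧ ∀ x : X,
      0 < dist x (xc i) → dist x (xc i) < δ → c⁻¹ * dist x (xc i) < dist (r^[p] x) (xc i))
    (hrc : ∀ i : ZMod p, ContinuousAt r (xc i))
    (hcc : ∀ i : ZMod p, ∀ᶠ y in 𝓝 (xc i), Nat.card (r ⁻¹' {y}) = Nat.card (r ⁻¹' {xc i}))
    (m0 : X → ℂ) (hm0m : Measurable m0) (hm0b : ∃ M : ℝ, ∀ x, ‖m0 x‖ ≤ M)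
    (β : ℝ → ℝ) (hβmono : MonotoneOn β (Set.Ici 0)) (hβ0 : ∀ t : ℝ, 0 ≤ t → 0 ≤ β t)
    (hβsum : ∀ A : ℝ, 0 < A → ∀ c : ℝ, 0 < c → c < 1 →
      Summable fun k : ℕ => β (A * c ^ (k + 1)))
    (hβlip : ∀ i : ZMod p, ∀ᶠ y in 𝓝 (xc i), ‖m0 y - m0 (xc i)‖ ≤ β (dist y (xc i)))
    (hqmf : ∀ x : X,
      (Nat.card (r ⁻¹' {x}) : ℝ)⁻¹ * ∑' y : r ⁻¹' {x}, ‖m0 y.1‖ ^ 2 = 1)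
    (hlp : ∀ i : ZMod p, m0 (xc i) = α i * (Real.sqrt (Nat.card (r ⁻¹' {r (xc i)})) : ℂ))
    (U : Lp ℂ 2 lamC ≃ₗᵢ[ℂ] Lp ℂ 2 lamC)
    (hU : ∀ ξ : Lp ℂ 2 lamC, ⇑(U ξ) =ᵐ[lamC]
      fun z => α (ι z) * (Real.sqrt (Nat.card (r ⁻¹' {r (z.1 0)})) : ℂ) * ξ (shiftHat r z))
    (π : (X → ℂ) → (Lp ℂ 2 lamC →L[ℂ] Lp ℂ 2 lamC))
    (hπ : ∀ f : X → ℂ, Measurable f → (∃ M : ℝ, ∀ x, ‖f x‖ ≤ M) →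
      ∀ ξ : Lp ℂ 2 lamC, ⇑(π f ξ) =ᵐ[lamC] fun z => f (z.1 0) * ξ z)
    (φ : Lp ℂ 2 lamC) (hφ : ⇑φ =ᵐ[lamC] scalingFn r α ι m0) :
    ∀ μh : Measure X,
      μh = ρ.withDensity (fun x =>
        ENNReal.ofReal (∑' ω : NC r xc x, ‖scalingFn r α ι m0 ω.1‖ ^ 2)) →
      ∀ V0 : Set (Lp ℂ 2 lamC),
        V0 = closure {ξ : Lp ℂ 2 lamC |
          ∃ f : X → ℂ, Measurable f ∧ (∃ M : ℝ, ∀ x, ‖f x‖ ≤ M) ∧ ξ = π f φ} →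
        ∃ J : Lp ℂ 2 μh →ₗᵢ[ℂ] Lp ℂ 2 lamC,
          (∀ f : X → ℂ, Measurable f → (∃ M : ℝ, ∀ x, ‖f x‖ ≤ M) →
            ∀ g : Lp ℂ 2 μh, ⇑g =ᵐ[μh] f → J g = π f φ) ∧
          Set.range (fun g : Lp ℂ 2 μh => J g) = V0 ∧
          (∀ g g' : Lp ℂ 2 μh,
            ⇑g' =ᵐ[μh] (fun x => m0 x * g (r x)) → U (J g) = J g') := by
  have : NeZero p := ⟨hp.ne'⟩
  have hrρ := measurePreserving_of_strongInvariance hr (QuadratureCondition.card_ne_zero hqmf) hsi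
  exact statement13_general r ρ hrρ.quasiMeasurePreserving xc hxc hcyc lamC hlam α hα ι hι hrep hrc
    hcc m0 β ⟨hβmono, hβ0 0 le_rfl, hβsum⟩ hβlip hqmf hlp U hU (fun f => π f) hπ φ hφ
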